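/- Memorization by Step networks under F_p: for any p ∈ ℕ, d ≤ 2^p, and n ∈ ℕ, there exists a 3-layer Step-network architecture with 6dn + 2n parameters, with all parameters in F_p and all affine operations performed as floating-point operations in F_p with round-to-nearest, such that for every dataset D = {(z_1, y_1), …, (z_n, y_n)} ⊂ F_p^d × F_p with z_i ≠ z_j for i ≠ j, there is a parameter assignment θ_D with f_{θ_D}(z_i) = y_i for all i ∈ [n]. -/

import Mathlib

/-- `F_p`: binary floating-point numbers with `(p+1)`-bit significand and
unbounded exponent, together with `0`: reals of the form `±m·2^e` with
`2^p ≤ m < 2^(p+1)`, `e : ℤ`. -/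
def Fp (p : ℕ) : Set ℝ :=
  {x | x = 0 ∨ ∃ (s : ℤ) (m : ℕ) (e : ℤ), (s = 1 ∨ s = -1) ∧
    2 ^ p ≤ m ∧ m < 2 ^ (p + 1) ∧ x = (s : ℝ) * m * (2 : ℝ) ^ e}

/-- `z` has an even last significand bit (or is zero). -/
def EvenSigFp (p : ℕ) (z : ℝ) : Prop :=
  z = 0 ∨ ∃ (s : ℤ) (m : ℕ) (e : ℤ), (s = 1 ∨ s = -1) ∧
    2 ^ p ≤ m ∧ m < 2 ^ (p + 1) ∧ m % 2 = 0 ∧ z = (s : ℝ) * m * (2 : ℝ) ^ e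

/-- `z` is the round-to-nearest (ties to even) value of `r` in `F_p`. -/
def RoundsTo (p : ℕ) (r z : ℝ) : Prop :=
  z ∈ Fp p ∧ (∀ w ∈ Fp p, |r - z| ≤ |r - w|) ∧
    ((∃ w ∈ Fp p, w ≠ z ∧ |r - w| = |r - z|) → EvenSigFp p z)

/-- A feedforward architecture on `d` inputs: `L` layers, layer widths, and
for each neuron in layer `l+1` (and the output neuron in layer `L`) a set of
indices of the previous layer's neurons (index `width l` denoting the bias
input `1`) that it is connected to; each connection carries one free
parameter. -/
structure Arch (d : ℕ) where
  L : ℕ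
  width : ℕ → ℕ
  input_eq : width 0 = d
  output_eq : width L = 1
  idx : ℕ → ℕ → Finset ℕ
  idx_sub : ∀ l i, idx (l + 1) i ⊆ Finset.range (width l + 1)

/-- Total number of free parameters of an architecture. -/
def Arch.nParams {d : ℕ} (A : Arch d) : ℕ :=
  ∑ l ∈ Finset.range A.L, ∑ i ∈ Finset.range (A.width (l + 1)), (A.idx (l + 1) i).card

/-- Floating-point affine map: each product `w j * v j` is rounded, and the
partial sums are accumulated left-to-right with each partial sum rounded. -/
noncomputable def fpAff (rnd : ℝ → ℝ) (w v : ℕ → ℝ) (s : List ℕ) : ℝ :=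
  s.foldl (fun a j => rnd (a + rnd (w j * v j))) 0

/-- Post-activation values of layer `l` (augmented with the bias value `1` at
index `width l`), computed with rounded floating-point operations. -/
noncomputable def postAct {d : ℕ} (A : Arch d) (σ rnd : ℝ → ℝ)
    (θ : ℕ → ℕ → ℕ → ℝ) (x : ℕ → ℝ) : ℕ → ℕ → ℝ
  | 0 => fun j => if j = A.width 0 then 1 else x j
  | l + 1 => fun j =>
      if j = A.width (l + 1) then 1
      else rnd (σ (fpAff rnd (θ (l + 1) j) (postAct A σ rnd θ x l)
        ((A.idx (l + 1) j).sort (· ≤ ·))))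

/-- Network output: the (pre-activation) affine output of the last layer. -/
noncomputable def evalNet {d : ℕ} (A : Arch d) (σ rnd : ℝ → ℝ)
    (θ : ℕ → ℕ → ℕ → ℝ) (x : ℕ → ℝ) : ℝ :=
  fpAff rnd (θ A.L 0) (postAct A σ rnd θ x (A.L - 1)) ((A.idx A.L 0).sort (· ≤ ·))

/-- The binary threshold activation `Step(t) = 1[t ≥ 0]`. -/
noncomputable def stepAct : ℝ → ℝ := fun t => if 0 ≤ t then 1 else 0

theorem Fp.zero_mem (p : ℕ) : (0 : ℝ) ∈ Fp p := Or.inl rfl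

theorem Fp.neg_mem {p : ℕ} {x : ℝ} (hx : x ∈ Fp p) : -x ∈ Fp p := by
  rcases hx with rfl | ⟨s, m, e, hs, h1, h2, rfl⟩
  · exact Or.inl (by simp)
  · refine Or.inr ⟨-s, m, e, ?_, h1, h2, by push_cast; ring⟩
    rcases hs with rfl | rfl <;> simp

theorem Fp.zpow_mem (p : ℕ) (k : ℤ) : (2 : ℝ) ^ k ∈ Fp p := by
  refine Or.inr ⟨1, 2 ^ p, k - p, Or.inl rfl, le_rfl, Nat.pow_lt_pow_right (by norm_num) (by simp), ?_⟩
  rw [zpow_sub₀ (by norm_num)]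
  push_cast
  rw [zpow_natCast]
  field_simp

theorem Fp.natCast_mem {p m : ℕ} (hm : m ≤ 2 ^ (p + 1)) : (m : ℝ) ∈ Fp p := by
  rcases Nat.eq_zero_or_pos m with rfl | h0
  · exact Or.inl (by simp)
  rcases hm.eq_or_lt with rfl | hlt
  · have := Fp.zpow_mem p ((p + 1 : ℕ) : ℤ)
    rw [zpow_natCast] at this
    exact_mod_cast this
  have hl : Nat.log 2 m ≤ p := Nat.lt_succ_iff.mp (Nat.log_lt_of_lt_pow h0.ne' hlt)
  have e1 : 2 ^ Nat.log 2 m * 2 ^ (p - Nat.log 2 m) = 2 ^ p := by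
    rw [← pow_add]; congr 1; omega
  have hpos : 0 < 2 ^ (p - Nat.log 2 m) := by positivity
  refine Or.inr ⟨1, m * 2 ^ (p - Nat.log 2 m), -((p - Nat.log 2 m : ℕ) : ℤ), Or.inl rfl, ?_, ?_, ?_⟩
  · rw [← e1]
    exact Nat.mul_le_mul_right _ (Nat.pow_log_le_self 2 h0.ne')
  · have := Nat.mul_lt_mul_of_pos_right (Nat.lt_pow_succ_log_self (b := 2) (by norm_num) m) hpos
    calc _ < _ := this
      _ = 2 * (2 ^ Nat.log 2 m * 2 ^ (p - Nat.log 2 m)) := by rw [Nat.succ_eq_add_one, pow_succ]; ring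
      _ = 2 ^ (p + 1) := by rw [e1]; ring
  · rw [zpow_neg, zpow_natCast]
    push_cast
    field_simp

theorem Fp.intCast_mem {p : ℕ} {m : ℤ} (h₁ : -2 ^ (p + 1) ≤ m) (h₂ : m ≤ 2 ^ (p + 1)) :
    (m : ℝ) ∈ Fp p := by
  obtain ⟨k, rfl | rfl⟩ := m.eq_nat_or_neg
  · exact_mod_cast Fp.natCast_mem (p := p) (m := k) (by exact_mod_cast h₂)
  · have : k ≤ 2 ^ (p + 1) := by
      have : (k : ℤ) ≤ 2 ^ (p + 1) := by linarith
      exact_mod_cast this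
    push_cast
    exact Fp.neg_mem (Fp.natCast_mem this)

theorem Fp.one_mem (p : ℕ) : (1 : ℝ) ∈ Fp p := by simpa using Fp.zpow_mem p 0

theorem RoundsTo.eq_self {p : ℕ} {r z : ℝ} (h : RoundsTo p r z) (hr : r ∈ Fp p) : z = r := by
  have := h.2.1 r hr
  rw [sub_self, abs_zero] at this
  have := abs_eq_zero.mp (le_antisymm this (abs_nonneg _))
  linarith

theorem RoundsTo.nonneg {p : ℕ} {r z : ℝ} (h : RoundsTo p r z) (hr : 0 ≤ r) : 0 ≤ z := by
  by_contra! hz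
  have := h.2.1 0 (Fp.zero_mem p)
  rw [sub_zero, abs_of_nonneg hr, abs_of_nonneg (by linarith)] at this
  linarith

theorem RoundsTo.neg {p : ℕ} {r z : ℝ} (h : RoundsTo p r z) (hr : r < 0) : z < 0 := by
  by_contra! hz
  obtain ⟨k, hk₁, -⟩ := exists_mem_Ico_zpow (x := -r) (y := (2 : ℝ)) (by linarith) (by norm_num)
  have h0 : (0 : ℝ) < 2 ^ k := by positivity
  have := h.2.1 _ (Fp.neg_mem (Fp.zpow_mem p k))
  rw [abs_of_nonpos (by linarith), abs_of_nonpos (by linarith)] at this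
  linarith

/-- Rounding with unbounded exponent preserves the sign. -/
theorem RoundsTo.nonneg_iff {p : ℕ} {r z : ℝ} (h : RoundsTo p r z) : 0 ≤ z ↔ 0 ≤ r :=
  ⟨fun hz => not_lt.mp fun hr => (h.neg hr).not_ge hz, h.nonneg⟩

section Rounding

variable {p : ℕ} {rnd : ℝ → ℝ}

theorem foldl_rnd_eq_sum (hrnd : ∀ r ∈ Fp p, rnd r = r) (w v : ℕ → ℝ) (c : ℕ → ℤ)
    (l : List ℕ) (a : ℤ) (hc : ∀ j ∈ l, w j * v j = c j)
    (hub : a + (l.map fun j => max (c j) 0).sum ≤ 2 ^ (p + 1))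
    (hlb : -2 ^ (p + 1) ≤ a + (l.map fun j => min (c j) 0).sum)
    (hcb : ∀ j ∈ l, -2 ^ (p + 1) ≤ c j ∧ c j ≤ 2 ^ (p + 1)) :
    l.foldl (fun a j => rnd (a + rnd (w j * v j))) (a : ℝ) =
      ((a + (l.map c).sum : ℤ) : ℝ) := by
  induction l generalizing a with
  | nil => simp
  | cons j l ih =>
    simp only [List.map_cons, List.sum_cons, List.mem_cons, forall_eq_or_imp] at *
    have hp : 0 ≤ (l.map fun j => max (c j) 0).sum :=
      List.sum_nonneg (by simp)
    have hn : (l.map fun j => min (c j) 0).sum ≤ 0 := by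
      simpa using List.sum_le_card_nsmul (l.map fun j => min (c j) 0) 0 (by simp)
    have hmm := le_max_left (c j) 0
    have hmm' := min_le_left (c j) 0
    have hm0 := le_max_right (c j) 0
    have hm0' := min_le_right (c j) 0
    have e : (a : ℝ) + rnd (w j * v j) = ((a + c j : ℤ) : ℝ) := by
      rw [hc.1, hrnd _ (Fp.intCast_mem hcb.1.1 hcb.1.2)]
      push_cast; ring
    rw [List.foldl_cons, e, hrnd _ (Fp.intCast_mem (by linarith) (by linarith)),
      ih (a + c j) hc.2 (by linarith) (by linarith) hcb.2, add_assoc]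

theorem foldl_rnd_of_eq_zero (hrnd : ∀ r ∈ Fp p, rnd r = r) (w v : ℕ → ℝ) (l : List ℕ)
    {a : ℝ} (ha : a ∈ Fp p) (h : ∀ j ∈ l, v j = 0) :
    l.foldl (fun a j => rnd (a + rnd (w j * v j))) a = a := by
  induction l with
  | nil => rfl
  | cons j l ih =>
    simp only [List.mem_cons, forall_eq_or_imp] at h
    rw [List.foldl_cons, h.1, mul_zero, hrnd 0 (Fp.zero_mem p), add_zero, hrnd a ha, ih h.2]

theorem foldl_rnd_indicator (hrnd : ∀ r ∈ Fp p, rnd r = r) (w v : ℕ → ℝ) (l : List ℕ)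
    (hl : l.Nodup) {i : ℕ} (hi : i ∈ l) (hw : w i ∈ Fp p)
    (hv : ∀ j ∈ l, v j = if j = i then 1 else 0) :
    l.foldl (fun a j => rnd (a + rnd (w j * v j))) 0 = w i := by
  induction l with
  | nil => simp at hi
  | cons j l ih =>
    rw [List.nodup_cons] at hl
    simp only [List.mem_cons, forall_eq_or_imp] at hv
    rw [List.foldl_cons, hv.1]
    by_cases hj : j = i
    · subst hj
      rw [if_pos rfl, mul_one, hrnd _ hw, zero_add, hrnd _ hw]
      refine foldl_rnd_of_eq_zero hrnd w v l hw fun k hk => ?_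
      rw [hv.2 k hk, if_neg]
      rintro rfl
      exact hl.1 hk
    · rw [if_neg hj, mul_zero, hrnd 0 (Fp.zero_mem p), add_zero, hrnd 0 (Fp.zero_mem p)]
      exact ih hl.2 ((List.mem_cons.mp hi).resolve_left (Ne.symm hj)) hv.2

/-- A single comparison neuron `w * x + b` is evaluated with the correct sign. -/
theorem fpAff_pair_nonneg_iff (hrnd : ∀ r, RoundsTo p r (rnd r)) (w v : ℕ → ℝ) {j d : ℕ}
    (hjd : j < d) (hw : w j * v j ∈ Fp p) (hb : w d * v d ∈ Fp p) :
    0 ≤ fpAff rnd w v (({j, d} : Finset ℕ).sort (· ≤ ·)) ↔ 0 ≤ w j * v j + w d * v d := by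
  have hs : ({j, d} : Finset ℕ).sort (· ≤ ·) = [j, d] := by
    rw [Finset.sort_insert (· ≤ ·) (by simpa using hjd.le) (by simpa using hjd.ne),
      Finset.sort_singleton]
  rw [hs, fpAff, List.foldl_cons, List.foldl_cons, List.foldl_nil, zero_add,
    (hrnd (w j * v j)).eq_self hw, (hrnd (w j * v j)).eq_self hw, (hrnd (w d * v d)).eq_self hb]
  exact (hrnd _).nonneg_iff

/-- A conjunction neuron: unit weights on `s`, and bias `-#s` at the index `b`. -/
theorem fpAff_conj_nonneg_iff (hrnd : ∀ r ∈ Fp p, rnd r = r) (w v : ℕ → ℝ) {b : ℕ}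
    {s : Finset ℕ} (hb : b ∉ s) (hs : s.card ≤ 2 ^ (p + 1)) (hw : ∀ k ∈ s, w k = 1)
    (hwb : w b = -s.card) (hvb : v b = 1) (hv : ∀ k ∈ s, v k = 0 ∨ v k = 1) :
    0 ≤ fpAff rnd w v ((insert b s).sort (· ≤ ·)) ↔ ∀ k ∈ s, v k = 1 := by
  classical
  let c : ℕ → ℤ := fun k => if k = b then -s.card else if v k = 1 then 1 else 0
  have hcb : c b = -s.card := if_pos rfl
  have hcs : ∀ k ∈ s, c k = if v k = 1 then 1 else 0 := fun k hk => by
    have : k ≠ b := by rintro rfl; exact hb hk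
    simp [c, this]
  have hs' : (s.card : ℤ) ≤ 2 ^ (p + 1) := by exact_mod_cast hs
  have h1 : (1 : ℤ) ≤ 2 ^ (p + 1) := one_le_pow₀ (by norm_num)
  have hsum (f : ℕ → ℤ) : (((insert b s).sort (· ≤ ·)).map f).sum = f b + ∑ k ∈ s, f k := by
    rw [← Finset.sum_insert hb, ← List.sum_toFinset f (Finset.sort_nodup _ _),
      Finset.sort_toFinset]
  have hub : ∑ k ∈ s, max (c k) 0 ≤ s.card := by
    have := Finset.sum_le_card_nsmul s (fun k => max (c k) 0) 1 fun k hk => by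
      rw [hcs k hk]; split_ifs <;> simp
    simpa using this
  have hlb : ∑ k ∈ s, min (c k) 0 = 0 := Finset.sum_eq_zero fun k hk => by
    rw [hcs k hk]; split_ifs <;> simp
  have hfold := foldl_rnd_eq_sum hrnd w v c ((insert b s).sort (· ≤ ·)) 0 ?_ ?_ ?_ ?_
  · rw [Int.cast_zero] at hfold
    rw [fpAff, hfold, hsum, hcb, zero_add, Finset.sum_congr rfl hcs, Int.cast_nonneg_iff,
      Finset.sum_boole]
    constructor
    · intro h k hk
      have hcard : s.card ≤ (s.filter fun k => v k = 1).card := by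
        omega
      have := Finset.eq_of_subset_of_card_le (Finset.filter_subset _ s) hcard
      rw [← this] at hk
      exact (Finset.mem_filter.mp hk).2
    · intro h
      rw [Finset.filter_true_of_mem h]
      simp
  · intro k hk
    rcases Finset.mem_insert.mp ((Finset.mem_sort _).mp hk) with rfl | hk
    · rw [hwb, hvb, hcb]; simp
    · rw [hw k hk, hcs k hk]
      rcases hv k hk with h | h <;> simp [h]
  · rw [hsum fun j => max (c j) 0, hcb]
    have : max (-(s.card : ℤ)) 0 = 0 := by simp
    linarith
  · rw [hsum fun j => min (c j) 0, hcb, hlb]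
    have : min (-(s.card : ℤ)) 0 = -s.card := by simp
    linarith
  · intro k hk
    rcases Finset.mem_insert.mp ((Finset.mem_sort _).mp hk) with rfl | hk
    · rw [hcb]
      constructor <;> linarith
    · rw [hcs k hk]
      split_ifs <;> constructor <;> linarith

end Rounding

/-- Layer 1 holds, for each of `n` points and each of `d` coordinates, two comparison neurons;
layer 2 holds one conjunction neuron per point; the output is a bias-free linear combination. -/
def memArch (d n : ℕ) : Arch d where
  L := 3
  width
    | 0 => d
    | 1 => 2 * d * n
    | 2 => n
    | _ => 1
  input_eq := rfl
  output_eq := rfl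
  idx
    | 1, k => if d = 0 then ∅ else {k / 2 % d, d}
    | 2, i => if i < n then insert (2 * d * n) (Finset.Ico (2 * d * i) (2 * d * (i + 1))) else ∅
    | 3, _ => Finset.range n
    | _, _ => ∅
  idx_sub l i := by
    match l with
    | 0 =>
      change (if d = 0 then ∅ else {i / 2 % d, d}) ⊆ Finset.range (d + 1)
      split_ifs with h
      · simp
      · have := Nat.mod_lt (i / 2) (Nat.pos_of_ne_zero h)
        intro k hk
        simp only [Finset.mem_insert, Finset.mem_singleton] at hk
        rw [Finset.mem_range]
        omega
    | 1 =>
      change (if i < n then insert (2 * d * n) (Finset.Ico (2 * d * i) (2 * d * (i + 1))) else ∅) ⊆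
        Finset.range (2 * d * n + 1)
      split_ifs with h
      · intro k hk
        have := Nat.mul_le_mul_left (2 * d) (Nat.succ_le_of_lt h)
        simp only [Finset.mem_insert, Finset.mem_Ico] at hk
        rw [Finset.mem_range]
        simp only [Nat.succ_eq_add_one] at this
        omega
      · simp
    | 2 => exact Finset.range_subset_range.mpr (Nat.le_succ n)
    | l + 3 => simp

theorem memArch_nParams (d n : ℕ) : (memArch d n).nParams = 6 * d * n + 2 * n := by
  have h₁ : ∑ k ∈ Finset.range (2 * d * n), ((memArch d n).idx 1 k).card = 2 * d * n * 2 := by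
    rw [Finset.sum_const_nat (m := 2), Finset.card_range]
    intro k hk
    have hd : d ≠ 0 := by
      rintro rfl
      simp at hk
    have := Nat.mod_lt (k / 2) (Nat.pos_of_ne_zero hd)
    simp only [memArch, if_neg hd]
    exact Finset.card_pair this.ne
  have h₂ : ∑ i ∈ Finset.range n, ((memArch d n).idx 2 i).card = n * (2 * d + 1) := by
    rw [Finset.sum_const_nat (m := 2 * d + 1), Finset.card_range]
    intro i hi
    rw [Finset.mem_range] at hi
    have := Nat.mul_le_mul_left (2 * d) (Nat.succ_le_of_lt hi)
    simp only [memArch, if_pos hi]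
    rw [Finset.card_insert_of_notMem, Nat.card_Ico, mul_add]
    · omega
    · rw [Finset.mem_Ico]
      simp only [Nat.succ_eq_add_one] at this
      omega
  have h₃ : ∑ i ∈ Finset.range 1, ((memArch d n).idx 3 i).card = n := by
    simp [memArch]
  calc (memArch d n).nParams
      = ∑ k ∈ Finset.range (2 * d * n), ((memArch d n).idx 1 k).card +
        ∑ i ∈ Finset.range n, ((memArch d n).idx 2 i).card +
        ∑ i ∈ Finset.range 1, ((memArch d n).idx 3 i).card := by
        simp only [Arch.nParams]
        exact (Finset.sum_range_succ _ 2).trans (by rw [Finset.sum_range_succ, Finset.sum_range_one]; rfl)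
    _ = _ := by rw [h₁, h₂, h₃]; ring

/-- The parameters of `memArch d n` memorizing points `Z i` with labels `Y i`. -/
noncomputable def memParam (d n : ℕ) (Z : ℕ → ℕ → ℝ) (Y : ℕ → ℝ) : ℕ → ℕ → ℕ → ℝ
  | 1, k, j =>
    if k % 2 = 0 then (if j = d then -Z (k / 2 / d) (k / 2 % d) else 1)
    else (if j = d then Z (k / 2 / d) (k / 2 % d) else -1)
  | 2, _, j => if j = 2 * d * n then -((2 * d : ℕ) : ℝ) else 1
  | 3, _, j => Y j
  | _, _, _ => 0

theorem memParam_mem {p d n : ℕ} (hd : d ≤ 2 ^ p) {Z : ℕ → ℕ → ℝ} {Y : ℕ → ℝ}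
    (hZ : ∀ i j, Z i j ∈ Fp p) (hY : ∀ i, Y i ∈ Fp p) (l i j : ℕ) :
    memParam d n Z Y l i j ∈ Fp p := by
  have h2d : 2 * d ≤ 2 ^ (p + 1) := by rw [pow_succ]; omega
  unfold memParam
  split
  · split_ifs
    exacts [Fp.neg_mem (hZ _ _), Fp.one_mem p, hZ _ _, Fp.neg_mem (Fp.one_mem p)]
  · split_ifs
    exacts [Fp.neg_mem (Fp.natCast_mem h2d), Fp.one_mem p]
  · exact hY _
  · exact Fp.zero_mem p

section Evaluation

variable {p d n : ℕ} {rnd : ℝ → ℝ} {Z : ℕ → ℕ → ℝ} {Y : ℕ → ℝ} {x : ℕ → ℝ}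

theorem rnd_stepAct (hrnd : ∀ r ∈ Fp p, rnd r = r) (t : ℝ) : rnd (stepAct t) = stepAct t := by
  unfold stepAct
  split_ifs
  exacts [hrnd _ (Fp.one_mem p), hrnd _ (Fp.zero_mem p)]

theorem stepAct_eq_of_iff {t : ℝ} {P : Prop} [Decidable P] (h : 0 ≤ t ↔ P) :
    stepAct t = if P then 1 else 0 := by
  simp only [stepAct, h]

theorem postAct_succ (A : Arch d) (σ rnd : ℝ → ℝ) (θ : ℕ → ℕ → ℕ → ℝ) (x : ℕ → ℝ) (l j : ℕ) :
    postAct A σ rnd θ x (l + 1) j = if j = A.width (l + 1) then 1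
      else rnd (σ (fpAff rnd (θ (l + 1) j) (postAct A σ rnd θ x l)
        ((A.idx (l + 1) j).sort (· ≤ ·)))) := rfl

open Classical in
theorem memArch_postAct_one (hrnd : ∀ r, RoundsTo p r (rnd r)) (hZ : ∀ i j, Z i j ∈ Fp p)
    (hx : ∀ j < d, x j ∈ Fp p) {k : ℕ} (hk : k < 2 * d * n) :
    postAct (memArch d n) stepAct rnd (memParam d n Z Y) x 1 k =
      if (if k % 2 = 0 then Z (k / 2 / d) (k / 2 % d) ≤ x (k / 2 % d)
        else x (k / 2 % d) ≤ Z (k / 2 / d) (k / 2 % d)) then 1 else 0 := by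
  have hd : d ≠ 0 := by
    rintro rfl
    simp at hk
  have hj := Nat.mod_lt (k / 2) (Nat.pos_of_ne_zero hd)
  have hidx : (memArch d n).idx (0 + 1) k = {k / 2 % d, d} := by simp only [memArch, if_neg hd]
  have hv : ∀ j, postAct (memArch d n) stepAct rnd (memParam d n Z Y) x 0 j =
      if j = d then 1 else x j := fun _ => rfl
  have hne : k ≠ (memArch d n).width (0 + 1) := hk.ne
  have hxm := hx _ hj
  have hzm := hZ (k / 2 / d) (k / 2 % d)
  rw [postAct_succ, if_neg hne, rnd_stepAct fun r hr => (hrnd r).eq_self hr, hidx]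
  refine stepAct_eq_of_iff ((fpAff_pair_nonneg_iff hrnd _ _ hj ?_ ?_).trans ?_)
  · rw [hv, if_neg hj.ne]
    simp only [memParam, if_neg hj.ne, zero_add]
    split_ifs
    · simpa using hxm
    · simpa using Fp.neg_mem hxm
  · rw [hv, if_pos rfl]
    simp only [memParam, zero_add]
    split_ifs
    · simpa using Fp.neg_mem hzm
    · simpa using hzm
  · rw [hv, hv, if_neg hj.ne, if_pos rfl]
    simp only [memParam, if_neg hj.ne, zero_add]
    split_ifs
    · constructor <;> intro h <;> linarith
    · constructor <;> intro h <;> linarith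

open Classical in
theorem memArch_postAct_two (hd : d ≤ 2 ^ p) (hrnd : ∀ r, RoundsTo p r (rnd r))
    (hZ : ∀ i j, Z i j ∈ Fp p) (hx : ∀ j < d, x j ∈ Fp p) {i : ℕ} (hi : i < n) :
    postAct (memArch d n) stepAct rnd (memParam d n Z Y) x 2 i =
      if ∀ j < d, Z i j = x j then 1 else 0 := by
  have hself : ∀ r ∈ Fp p, rnd r = r := fun r hr => (hrnd r).eq_self hr
  have hidx : (memArch d n).idx (1 + 1) i =
      insert (2 * d * n) (Finset.Ico (2 * d * i) (2 * d * (i + 1))) := by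
    simp only [memArch, if_pos hi]
  have hne : i ≠ (memArch d n).width (1 + 1) := hi.ne
  have hle : 2 * d * (i + 1) ≤ 2 * d * n := Nat.mul_le_mul_left _ hi
  have hcard : (Finset.Ico (2 * d * i) (2 * d * (i + 1))).card = 2 * d := by
    rw [Nat.card_Ico, mul_add]; omega
  have hlt : ∀ k ∈ Finset.Ico (2 * d * i) (2 * d * (i + 1)), k < 2 * d * n := fun k hk =>
    (Finset.mem_Ico.mp hk).2.trans_le hle
  rw [postAct_succ, if_neg hne, rnd_stepAct hself, hidx]
  refine stepAct_eq_of_iff ((fpAff_conj_nonneg_iff hself _ _ ?_ ?_ ?_ ?_ ?_ ?_).trans ?_)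
  · exact fun h => (hlt _ h).false
  · rw [hcard, pow_succ]; omega
  · exact fun k hk => if_neg (hlt k hk).ne
  · rw [hcard]
    exact if_pos rfl
  · exact if_pos rfl
  · intro k hk
    rw [memArch_postAct_one hrnd hZ hx (hlt k hk)]
    split_ifs <;> simp
  · constructor
    · intro h j hj
      have key : ∀ s < 2, 2 * (d * i + j) + s ∈ Finset.Ico (2 * d * i) (2 * d * (i + 1)) := by
        intro s hs
        rw [Finset.mem_Ico]
        constructor <;> nlinarith
      have hdiv : (d * i + j) / d = i := by
        rw [Nat.mul_add_div (by omega), Nat.div_eq_of_lt hj, add_zero]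
      have hmod : (d * i + j) % d = j := by
        rw [Nat.mul_add_mod, Nat.mod_eq_of_lt hj]
      have h0 := h _ (key 0 (by norm_num))
      have h1 := h _ (key 1 (by norm_num))
      rw [memArch_postAct_one hrnd hZ hx (hlt _ (key 0 (by norm_num)))] at h0
      rw [memArch_postAct_one hrnd hZ hx (hlt _ (key 1 (by norm_num)))] at h1
      have e0 : (2 * (d * i + j) + 0) / 2 = d * i + j := by omega
      have e1 : (2 * (d * i + j) + 1) / 2 = d * i + j := by omega
      have m0 : (2 * (d * i + j) + 0) % 2 = 0 := by omega
      have m1 : (2 * (d * i + j) + 1) % 2 ≠ 0 := by omega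
      simp only [e0, hdiv, hmod, if_pos m0] at h0
      simp only [e1, hdiv, hmod, if_neg m1] at h1
      apply le_antisymm
      · by_contra hcon
        simp [hcon] at h0
      · by_contra hcon
        simp [hcon] at h1
    · intro h k hk
      have hd0 : 0 < d := by
        rcases Nat.eq_zero_or_pos d with rfl | h0
        · simp at hk
        · exact h0
      have hj := Nat.mod_lt (k / 2) hd0
      have hdiv : k / 2 / d = i := by
        rw [Nat.div_div_eq_div_mul]
        rw [Finset.mem_Ico] at hk
        exact Nat.div_eq_of_lt_le (by linarith) (by linarith)
      rw [memArch_postAct_one hrnd hZ hx (hlt k hk), hdiv, h _ hj]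
      simp

theorem memArch_evalNet (hd : d ≤ 2 ^ p) (hrnd : ∀ r, RoundsTo p r (rnd r))
    (hZ : ∀ i j, Z i j ∈ Fp p) (hY : ∀ i, Y i ∈ Fp p) (hx : ∀ j < d, x j ∈ Fp p)
    {i : ℕ} (hi : i < n) (hxi : ∀ i' < n, (∀ j < d, Z i' j = x j) ↔ i' = i) :
    evalNet (memArch d n) stepAct rnd (memParam d n Z Y) x = Y i := by
  refine foldl_rnd_indicator (fun r hr => (hrnd r).eq_self hr) (memParam d n Z Y 3 0) _ _
    (Finset.sort_nodup _ _) (i := i) ?_ (hY i) ?_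
  · exact (Finset.mem_sort _).mpr (Finset.mem_range.mpr hi)
  · intro k hk
    have hk' : k < n := Finset.mem_range.mp ((Finset.mem_sort _).mp hk)
    refine (memArch_postAct_two hd hrnd hZ hx hk').trans ?_
    simp only [hxi k hk']

end Evaluation

/-- Memorization by Step networks under `F_p`: for `d ≤ 2^p` there is a fixed
3-layer Step-network architecture with `6dn + 2n` parameters such that any
dataset of `n` distinct `F_p^d` points with `F_p` labels can be memorized by
some choice of `F_p` parameters, with all arithmetic performed as rounded
floating-point operations in `F_p`. -/
theorem memorization_step_Fp (p d n : ℕ) (hd : d ≤ 2 ^ p) :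
    ∃ A : Arch d, A.L = 3 ∧ A.nParams = 6 * d * n + 2 * n ∧
      ∀ rnd : ℝ → ℝ, (∀ r, RoundsTo p r (rnd r)) →
        ∀ (z : Fin n → ℕ → ℝ) (y : Fin n → ℝ),
          (∀ i j, j < d → z i j ∈ Fp p) → (∀ i, y i ∈ Fp p) →
          (∀ i k : Fin n, i ≠ k → ∃ j, j < d ∧ z i j ≠ z k j) →
          ∃ θ : ℕ → ℕ → ℕ → ℝ, (∀ l i j, θ l i j ∈ Fp p) ∧
            ∀ i, evalNet A stepAct rnd θ (z i) = y i := by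
  refine ⟨memArch d n, rfl, memArch_nParams d n, fun rnd hrnd z y hz hy hne => ?_⟩
  let Z : ℕ → ℕ → ℝ := fun i j => if h : i < n ∧ j < d then z ⟨i, h.1⟩ j else 0
  let Y : ℕ → ℝ := fun i => if h : i < n then y ⟨i, h⟩ else 0
  have hZ : ∀ i j, Z i j ∈ Fp p := fun i j => by
    dsimp only [Z]
    split_ifs with h
    exacts [hz _ _ h.2, Fp.zero_mem p]
  have hY : ∀ i, Y i ∈ Fp p := fun i => by
    dsimp only [Y]
    split_ifs
    exacts [hy _, Fp.zero_mem p]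
  have hZz : ∀ (i : Fin n) (j : ℕ), j < d → Z i j = z i j := fun i j hj =>
    dif_pos ⟨i.isLt, hj⟩
  refine ⟨memParam d n Z Y, memParam_mem hd hZ hY, fun i => ?_⟩
  rw [memArch_evalNet hd hrnd hZ hY (hz i) i.isLt fun i' hi' => ⟨fun h => ?_, ?_⟩]
  · exact dif_pos i.isLt
  · by_contra hcon
    obtain ⟨j, hj, hzj⟩ := hne ⟨i', hi'⟩ i fun h' => hcon (congrArg Fin.val h')
    exact hzj ((hZz ⟨i', hi'⟩ j hj).symm.trans (h j hj))
  · rintro rfl j hj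
    exact hZz i j hj
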